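/- Let d ≥ K, λ_W > 0, λ_H > 0, c := √(λ_H λ_W) < 1 and ρ := (1 − c)√(λ_W/λ_H). For any R ∈ ℝ^{d×K} with RᵀR = I_K, the pair defined by H* := √ρ · (R ⊗ 1_nᵀ) (the matrix whose n columns of class k all equal √ρ · r_k, where r_k is the k-th column of R) and W* := √(λ_H/λ_W) · √ρ · Rᵀ is a global minimizer of g. -/

import Mathlib

open Matrix Filter
open scoped BigOperators

noncomputable section

variable {K n d : ℕ}

/-- The one-hot label matrix `Y = I_K ⊗ 1_nᵀ`: columns are indexed by class/sample pairs. -/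
def Ymat (K n : ℕ) : Matrix (Fin K) (Fin K × Fin n) ℝ :=
  Matrix.of fun k p => if p.1 = k then 1 else 0

/-- Squared Frobenius norm. -/
def frobSq {m p : Type*} [Fintype m] [Fintype p] (M : Matrix m p ℝ) : ℝ :=
  ∑ i, ∑ j, (M i j) ^ 2

/-- Frobenius norm. -/
def frobNorm {m p : Type*} [Fintype m] [Fintype p] (M : Matrix m p ℝ) : ℝ :=
  Real.sqrt (frobSq M)

/-- The unconstrained-features objective `g`. -/
def g (lW lH : ℝ) (W : Matrix (Fin K) (Fin d) ℝ)
    (H : Matrix (Fin d) (Fin K × Fin n) ℝ) : ℝ :=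
  (1 / (2 * (K : ℝ) * n)) * frobSq (W * H - Ymat K n) +
    (lW / (2 * (K : ℝ))) * frobSq W + (lH / (2 * (K : ℝ) * n)) * frobSq H

/-- Class means. -/
def classMean (H : Matrix (Fin d) (Fin K × Fin n) ℝ) (k : Fin K) : Fin d → ℝ :=
  fun a => (1 / (n : ℝ)) * ∑ i, H a (k, i)

/-- Global mean. -/
def globalMean (H : Matrix (Fin d) (Fin K × Fin n) ℝ) : Fin d → ℝ :=
  fun a => (1 / ((K : ℝ) * n)) * ∑ p, H a p

/-- Matrix of class means `H̄ ∈ ℝ^{d×K}`. -/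
def Hbar (H : Matrix (Fin d) (Fin K × Fin n) ℝ) : Matrix (Fin d) (Fin K) ℝ :=
  Matrix.of fun a k => classMean H k a

/-- `H̄ ⊗ 1_nᵀ`: the matrix whose n columns of class k all equal the class mean. -/
def HbarSpread (H : Matrix (Fin d) (Fin K × Fin n) ℝ) :
    Matrix (Fin d) (Fin K × Fin n) ℝ :=
  Matrix.of fun a p => classMean H p.1 a

/-- Within-class covariance. -/
def SigmaW (H : Matrix (Fin d) (Fin K × Fin n) ℝ) : Matrix (Fin d) (Fin d) ℝ :=
  Matrix.of fun a b =>
    (1 / ((K : ℝ) * n)) * ∑ p : Fin K × Fin n,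
      (H a p - classMean H p.1 a) * (H b p - classMean H p.1 b)

/-- Between-class covariance. -/
def SigmaB (H : Matrix (Fin d) (Fin K × Fin n) ℝ) : Matrix (Fin d) (Fin d) ℝ :=
  Matrix.of fun a b =>
    (1 / (K : ℝ)) * ∑ k : Fin K,
      (classMean H k a - globalMean H a) * (classMean H k b - globalMean H b)

/-- Non-centered total covariance. -/
def SigmaTtil (H : Matrix (Fin d) (Fin K × Fin n) ℝ) : Matrix (Fin d) (Fin d) ℝ :=
  (1 / ((K : ℝ) * n)) • (H * Hᵀ)

/-- Non-centered between-class covariance. -/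
def SigmaBtil (H : Matrix (Fin d) (Fin K × Fin n) ℝ) : Matrix (Fin d) (Fin d) ℝ :=
  Matrix.of fun a b => (1 / (K : ℝ)) * ∑ k : Fin K, classMean H k a * classMean H k b

/-- The closed-form optimal last-layer weights `W*(H)`. -/
def Wstar (lW : ℝ) (H : Matrix (Fin d) (Fin K × Fin n) ℝ) :
    Matrix (Fin K) (Fin d) ℝ :=
  Ymat K n * Hᵀ * (H * Hᵀ + ((n : ℝ) * lW) • (1 : Matrix (Fin d) (Fin d) ℝ))⁻¹

/-- The central-path loss `L(H)`. -/
def Lcp (lW lH : ℝ) (H : Matrix (Fin d) (Fin K × Fin n) ℝ) : ℝ :=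
  (1 / (2 * (K : ℝ) * n)) * frobSq (Wstar lW H * H - Ymat K n) +
    (lW / (2 * (K : ℝ))) * frobSq (Wstar lW H) +
    (lH / (2 * (K : ℝ) * n)) * frobSq H

/-- `A(H) = Σ̃_T(H) + (λ_W/K) I`. -/
def Amat (lW : ℝ) (H : Matrix (Fin d) (Fin K × Fin n) ℝ) : Matrix (Fin d) (Fin d) ℝ :=
  SigmaTtil H + (lW / (K : ℝ)) • 1

/-- The gradient of the central-path loss w.r.t. the Frobenius inner product. -/
def gradL (lW lH : ℝ) (H : Matrix (Fin d) (Fin K × Fin n) ℝ) :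
    Matrix (Fin d) (Fin K × Fin n) ℝ :=
  (1 / ((K : ℝ) ^ 2 * n)) •
    ((Amat lW H)⁻¹ * (H - HbarSpread H)
      - (Amat lW H)⁻¹ * (SigmaW H + (lW / (K : ℝ)) • 1) * (Amat lW H)⁻¹ * H
      + (lH * (K : ℝ)) • H)

/-- NC1 metric. -/
def NC1til (H : Matrix (Fin d) (Fin K × Fin n) ℝ) : ℝ :=
  (SigmaW H).trace / (SigmaB H).trace

/-! Write `c = √(λ_H λ_W)`. Since `Y Yᵀ = n I`, we have `‖Wᵀ Y‖² = n ‖W‖²`, and completing the two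
squares in the objective gives
`2Kn g(W, H) = ‖W H - (1 - c) Y‖² + ‖√λ_W Wᵀ Y - √λ_H H‖² + (1 - (1 - c)²) ‖Y‖²`.
Hence a pair at which both squares vanish is a global minimizer, and the pair built from an
orthonormal frame is such a pair. -/

section Frobenius

variable {l m p : Type*} [Fintype l] [Fintype m] [Fintype p]

lemma frobSq_nonneg (M : Matrix m p ℝ) : 0 ≤ frobSq M := by
  unfold frobSq
  positivity

@[simp] lemma frobSq_zero : frobSq (0 : Matrix m p ℝ) = 0 := by
  simp [frobSq]

lemma frobSq_eq_trace_mul_transpose (M : Matrix m p ℝ) : frobSq M = (M * Mᵀ).trace := by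
  simp [frobSq, trace, mul_apply, sq]

lemma frobSq_transpose (M : Matrix m p ℝ) : frobSq Mᵀ = frobSq M := by
  rw [frobSq_eq_trace_mul_transpose, frobSq_eq_trace_mul_transpose, transpose_transpose,
    trace_mul_comm]

lemma frobSq_smul (t : ℝ) (M : Matrix m p ℝ) : frobSq (t • M) = t ^ 2 * frobSq M := by
  simp [frobSq, Finset.mul_sum, mul_pow]

lemma frobSq_sub (M N : Matrix m p ℝ) :
    frobSq (M - N) = frobSq M - 2 * (M * Nᵀ).trace + frobSq N := by
  have trace_swap : (N * Mᵀ).trace = (M * Nᵀ).trace := by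
    rw [← trace_transpose, transpose_mul, transpose_transpose]
  simp only [frobSq_eq_trace_mul_transpose, transpose_sub, Matrix.sub_mul, Matrix.mul_sub,
    trace_sub, trace_swap]
  ring

lemma frobSq_mul_of_mul_transpose_eq_smul_one [DecidableEq m] {Y : Matrix m p ℝ} {s : ℝ}
    (hY : Y * Yᵀ = s • 1) (M : Matrix l m ℝ) : frobSq (M * Y) = s * frobSq M := by
  rw [frobSq_eq_trace_mul_transpose, transpose_mul, Matrix.mul_assoc, ← Matrix.mul_assoc Y, hY,
    smul_mul, Matrix.one_mul, Matrix.mul_smul, trace_smul, frobSq_eq_trace_mul_transpose,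
    smul_eq_mul]

lemma frobSq_mul_sub_add_regularizers_eq [DecidableEq m] {Y : Matrix m p ℝ} {s : ℝ}
    (hY : Y * Yᵀ = s • 1) (a b : ℝ) (W : Matrix m l ℝ) (H : Matrix l p ℝ) :
    frobSq (W * H - Y) + s * a ^ 2 * frobSq W + b ^ 2 * frobSq H =
      frobSq (W * H - (1 - a * b) • Y) + frobSq (a • (Wᵀ * Y) - b • H) +
        (1 - (1 - a * b) ^ 2) * frobSq Y := by
  have cross_term : (Wᵀ * Y * Hᵀ).trace = (W * H * Yᵀ).trace := by
    rw [← trace_transpose, transpose_mul, transpose_mul, transpose_transpose, transpose_transpose,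
      ← Matrix.mul_assoc, trace_mul_cycle]
  simp only [frobSq_sub, frobSq_smul, frobSq_mul_of_mul_transpose_eq_smul_one hY,
    frobSq_transpose, transpose_smul, Matrix.mul_smul, smul_mul, trace_smul, smul_eq_mul,
    cross_term]
  ring

end Frobenius

lemma mul_Ymat_apply {m : Type*} (M : Matrix m (Fin K) ℝ) (i : m) (q : Fin K × Fin n) :
    (M * Ymat K n) i q = M i q.1 := by
  simp [Ymat, mul_apply]

lemma Ymat_mul_transpose : Ymat K n * (Ymat K n)ᵀ = (n : ℝ) • 1 := by
  ext k j
  by_cases hkj : k = j <;> simp [Ymat, mul_apply, Fintype.sum_prod_type, hkj, eq_comm]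

lemma g_eq_sum_frobSq (hn : 0 < n) {lW lH : ℝ} (hlW : 0 ≤ lW) (hlH : 0 ≤ lH)
    (W : Matrix (Fin K) (Fin d) ℝ) (H : Matrix (Fin d) (Fin K × Fin n) ℝ) :
    g lW lH W H = 1 / (2 * (K : ℝ) * n) *
      (frobSq (W * H - (1 - √lW * √lH) • Ymat K n) + frobSq (√lW • (Wᵀ * Ymat K n) - √lH • H) +
        (1 - (1 - √lW * √lH) ^ 2) * frobSq (Ymat K n)) := by
  rw [← frobSq_mul_sub_add_regularizers_eq Ymat_mul_transpose, Real.sq_sqrt hlW,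
    Real.sq_sqrt hlH, g]
  field_simp

lemma g_le_of_mul_eq_of_transpose_mul_eq (hn : 0 < n) {lW lH : ℝ} (hlW : 0 ≤ lW) (hlH : 0 ≤ lH)
    {W₀ : Matrix (Fin K) (Fin d) ℝ} {H₀ : Matrix (Fin d) (Fin K × Fin n) ℝ}
    (hfit : W₀ * H₀ = (1 - √lW * √lH) • Ymat K n)
    (hbalance : √lW • (W₀ᵀ * Ymat K n) = √lH • H₀)
    (W : Matrix (Fin K) (Fin d) ℝ) (H : Matrix (Fin d) (Fin K × Fin n) ℝ) :
    g lW lH W₀ H₀ ≤ g lW lH W H := by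
  rw [g_eq_sum_frobSq hn hlW hlH W₀, g_eq_sum_frobSq hn hlW hlH W, hfit, hbalance, sub_self,
    sub_self, frobSq_zero, frobSq_zero, add_zero]
  gcongr
  exact add_nonneg (frobSq_nonneg _) (frobSq_nonneg _)

lemma g_smul_transpose_smul_mul_Ymat_le (hn : 0 < n) {lW lH : ℝ} (hlW : 0 ≤ lW) (hlH : 0 ≤ lH)
    {R : Matrix (Fin d) (Fin K) ℝ} (hR : Rᵀ * R = 1) {x y : ℝ}
    (hfit : x * y = 1 - √lW * √lH) (hbalance : √lW * x = √lH * y)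
    (W : Matrix (Fin K) (Fin d) ℝ) (H : Matrix (Fin d) (Fin K × Fin n) ℝ) :
    g lW lH (x • Rᵀ) (y • (R * Ymat K n)) ≤ g lW lH W H := by
  refine g_le_of_mul_eq_of_transpose_mul_eq hn hlW hlH ?_ ?_ W H
  · rw [smul_mul, Matrix.mul_smul, smul_smul, ← Matrix.mul_assoc, hR, Matrix.one_mul, hfit]
  · rw [transpose_smul, transpose_transpose, smul_mul, smul_smul, smul_smul, hbalance]

/-- for any partial orthonormal matrix `R ∈ ℝ^{d×K}` (`RᵀR = I_K`), the pair
`H* = √ρ (R ⊗ 1_nᵀ)`, `W* = √(λ_H/λ_W) √ρ Rᵀ` is a global minimizer of `g`,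
where `ρ = (1-c)√(λ_W/λ_H)` and `c = √(λ_H λ_W) < 1`. -/
theorem orthonormal_frame_is_ufm_minimizer
    (K n d : ℕ) (hK : 0 < K) (hn : 0 < n) (hdK : K ≤ d)
    (lW lH : ℝ) (hlW : 0 < lW) (hlH : 0 < lH)
    (hc : Real.sqrt (lH * lW) < 1)
    (R : Matrix (Fin d) (Fin K) ℝ) (hR : Rᵀ * R = 1) :
    ∀ (W : Matrix (Fin K) (Fin d) ℝ) (H : Matrix (Fin d) (Fin K × Fin n) ℝ),
      g lW lH
        ((Real.sqrt (lH / lW) *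
            Real.sqrt ((1 - Real.sqrt (lH * lW)) * Real.sqrt (lW / lH))) • Rᵀ)
        (Matrix.of (fun a p =>
            Real.sqrt ((1 - Real.sqrt (lH * lW)) * Real.sqrt (lW / lH)) * R a p.1 :
          Fin d → Fin K × Fin n → ℝ))
      ≤ g lW lH W H := by
  intro W H
  have hsW : 0 < √lW := Real.sqrt_pos.2 hlW
  have hsH : 0 < √lH := Real.sqrt_pos.2 hlH
  rw [Real.sqrt_mul hlH.le] at hc
  rw [Real.sqrt_mul hlH.le, Real.sqrt_div hlH.le, Real.sqrt_div hlW.le]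
  set r := √((1 - √lH * √lW) * (√lW / √lH))
  have hr : r ^ 2 = (1 - √lH * √lW) * (√lW / √lH) :=
    Real.sq_sqrt (mul_nonneg (by linarith) (by positivity))
  have features_eq : (of fun a p => r * R a p.1 : Matrix (Fin d) (Fin K × Fin n) ℝ) =
      r • (R * Ymat K n) := by
    ext a p
    simp [mul_Ymat_apply]
  rw [features_eq]
  refine g_smul_transpose_smul_mul_Ymat_le hn hlW.le hlH.le hR ?fit ?balance W H
  case fit =>
    rw [mul_assoc, ← sq, hr]
    field_simp
  case balance => field_simp

end
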